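/- For every integer n > 1, there exists a DWA over {a, b, i} with exactly n + 2 states that realizes O_n; one such DWA is the chain with states q_0, …, q_n, s, transitions δ(q_j, x) = q_{j+1} for j < n and δ(q_n, x) = δ(s, x) = s for every letter x, and weights c(q_j, i) = 0, c(q_j, a) = −c(q_j, b) = 2^{n−1−j} for j < n, c(q_n, a) = −c(q_n, b) = 1, c(q_n, i) = 0, and c(s, x) = 0 for every letter x. -/

import Mathlib

/-- A deterministic weighted automaton (DWA) over alphabet `A` with state space `Q`. -/
structure DWA (A : Type) (Q : Type) where
  init : Q
  δ : Q → A → Q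
  c : Q → A → ℤ

/-- The extended transition function `δ̂`. -/
def DWA.run {A Q : Type} (M : DWA A Q) (q : Q) (w : List A) : Q :=
  w.foldl M.δ q

/-- The accumulated weight of the run on `w` starting in state `q`. -/
def DWA.valFrom {A Q : Type} (M : DWA A Q) : Q → List A → ℤ
  | _, [] => 0
  | q, x :: w => M.c q x + M.valFrom (M.δ q x) w

/-- The value `A(w)` of a word: the sum of the weights along the run from the initial state. -/
def DWA.val {A Q : Type} (M : DWA A Q) (w : List A) : ℤ :=
  M.valFrom M.init w

/-- The three-letter alphabet `{a, b, i}`. -/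
inductive ABI where
  | a : ABI
  | b : ABI
  | i : ABI
deriving DecidableEq

open Classical in
/-- The observation function `O_n` on nonempty words over `{a, b, i}`:
`O_n(w) = 1` if `w` consists only of `i`'s, or `i^{n+1}` is a prefix of `w`, or
`i^k·a·b^{n-k}` or `i^k·b·a^{n-k}` is a prefix of `w` for some `k < n`; otherwise `O_n(w) = 2`
if the first letter of `w` different from `i` is `a`, and `O_n(w) = 0` if it is `b`. -/
noncomputable def Obs (n : ℕ) (w : List ABI) : ℕ :=
  if (∀ x ∈ w, x = ABI.i) ∨
      (List.replicate (n + 1) ABI.i <+: w) ∨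
      (∃ k < n, List.replicate k ABI.i ++ [ABI.a] ++ List.replicate (n - k) ABI.b <+: w) ∨
      (∃ k < n, List.replicate k ABI.i ++ [ABI.b] ++ List.replicate (n - k) ABI.a <+: w)
  then 1
  else if ∃ k, List.replicate k ABI.i ++ [ABI.a] <+: w then 2
  else 0

/-- A DWA `M` over `{a, b, i}` realizes `O_n` if, for every nonempty word `w`,
`M(w) < 0 ↔ O_n(w) = 0`, `M(w) = 0 ↔ O_n(w) = 1`, and `M(w) > 0 ↔ O_n(w) = 2`. -/
def Realizes {Q : Type} (n : ℕ) (M : DWA ABI Q) : Prop :=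
  ∀ w : List ABI, w ≠ [] →
    (M.val w < 0 ↔ Obs n w = 0) ∧ (M.val w = 0 ↔ Obs n w = 1) ∧ (0 < M.val w ↔ Obs n w = 2)

/-!
Every transition of the chain advances by one state whatever the letter, so the value of a word is
a weighted sum of the signs of its letters, with weights `2^(n-1), …, 2, 1, 1`. Each weight except
the last equals the sum of the later ones. Hence the first letter different from `i` decides the
sign of the value, unless it is cancelled exactly, which happens only when all the remaining
weighted letters have the opposite sign.
-/

/-- The sign with which a letter enters the weights of the chain. -/
def ABI.sign : ABI → ℤ
  | i => 0
  | a => 1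
  | b => -1

section ChainSum

variable {A : Type}

/-- The weighted sum `∑ σ(w[j]) · v_j` over the first `r` letters of `w`, where the weights
`v_1, …, v_r` are `2^(r-2), …, 2, 1, 1`: the value accumulated on `w` by a chain automaton with `r`
weighted states left. Truncated subtraction makes the last weight `2^(0-1) = 1`. -/
def chainSum (σ : A → ℤ) : ℕ → List A → ℤ
  | 0, _ => 0
  | _ + 1, [] => 0
  | r + 1, x :: w => σ x * 2 ^ (r - 1) + chainSum σ r w

@[simp]
theorem chainSum_nil (σ : A → ℤ) (r : ℕ) : chainSum σ r [] = 0 := by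
  cases r <;> rfl

theorem chainSum_neg (σ : A → ℤ) (r : ℕ) (w : List A) : chainSum (-σ) r w = -chainSum σ r w := by
  induction r generalizing w with
  | zero => rfl
  | succ r ih =>
    cases w with
    | nil => rfl
    | cons x w => simp only [chainSum, Pi.neg_apply, ih]; ring

theorem chainSum_succ_le {σ : A → ℤ} (hσ : ∀ x, σ x ≤ 1) (r : ℕ) (w : List A) :
    chainSum σ (r + 1) w ≤ 2 ^ r := by
  induction r generalizing w with
  | zero => cases w <;> simp [chainSum, hσ]
  | succ r ih =>
    cases w with
    | nil => simp
    | cons x w =>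
      calc σ x * 2 ^ r + chainSum σ (r + 1) w
        _ ≤ 1 * 2 ^ r + 2 ^ r := by gcongr; exacts [hσ x, ih w]
        _ = 2 ^ (r + 1) := by ring

theorem chainSum_succ_eq_iff {σ : A → ℤ} {z : A} (hσ : ∀ x, σ x ≤ 1) (hz : ∀ x, σ x = 1 ↔ x = z)
    (r : ℕ) (w : List A) :
    chainSum σ (r + 1) w = 2 ^ r ↔ List.replicate (r + 1) z <+: w := by
  induction r generalizing w with
  | zero => cases w <;> simp [chainSum, hz, eq_comm]
  | succ r ih =>
    cases w with
    | nil => simp [List.replicate_succ, (pow_pos (two_pos : (0 : ℤ) < 2) (r + 1)).ne]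
    | cons x w =>
      have head_le : σ x * 2 ^ r ≤ 1 * 2 ^ r := by gcongr; exact hσ x
      have tail_le := chainSum_succ_le hσ r w
      calc σ x * 2 ^ r + chainSum σ (r + 1) w = 2 ^ (r + 1)
        _ ↔ σ x * 2 ^ r + chainSum σ (r + 1) w = 1 * 2 ^ r + 2 ^ r := by rw [pow_succ]; ring_nf
        _ ↔ σ x * 2 ^ r = 1 * 2 ^ r ∧ chainSum σ (r + 1) w = 2 ^ r :=
          add_eq_add_iff_eq_and_eq head_le tail_le
        _ ↔ z = x ∧ List.replicate (r + 1) z <+: w := by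
          rw [mul_left_inj' (by positivity), hz, ih, eq_comm]
        _ ↔ List.replicate (r + 1 + 1) z <+: x :: w := List.cons_prefix_cons.symm

theorem sign_two_pow_sub_chainSum [DecidableEq A] {σ : A → ℤ} {z : A} (hσ : ∀ x, σ x ≤ 1)
    (hz : ∀ x, σ x = 1 ↔ x = z) (r : ℕ) (w : List A) :
    (2 ^ (r - 1) - chainSum σ r w).sign = if 0 < r ∧ List.replicate r z <+: w then 0 else 1 := by
  cases r with
  | zero => simp [chainSum]
  | succ r =>
    have le_pow := chainSum_succ_le hσ r w
    have eq_iff := chainSum_succ_eq_iff hσ hz r w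
    simp only [Nat.zero_lt_succ, true_and, Nat.add_sub_cancel, ← eq_iff]
    split_ifs with h
    · rw [h, sub_self, Int.sign_zero]
    · exact Int.sign_eq_one_of_pos (sub_pos.mpr (lt_of_le_of_ne le_pow h))

end ChainSum

/-- The chain automaton with states `q_0, …, q_n, s` over an arbitrary alphabet, where `q_j` is
`j : Fin (n + 2)` and `s` is the last element: a letter `x` read in `q_j` has weight
`σ x * 2 ^ (n - 1 - j)`, which is `σ x` for `j = n` by truncated subtraction. -/
def chainDWA {A : Type} (σ : A → ℤ) (n : ℕ) : DWA A (Fin (n + 2)) where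
  init := 0
  δ j _ := Fin.clamp (j + 1) (n + 1)
  c j x := if j.val ≤ n then σ x * 2 ^ (n - 1 - j) else 0

theorem chainDWA_valFrom {A : Type} (σ : A → ℤ) (n : ℕ) (j : Fin (n + 2)) (w : List A) :
    (chainDWA σ n).valFrom j w = chainSum σ (n + 1 - j) w := by
  induction w generalizing j with
  | nil => rw [DWA.valFrom, chainSum_nil]
  | cons x w ih =>
    rw [DWA.valFrom, ih]
    have states_left : n + 1 - min (j.val + 1) (n + 1) = n - j := by omega
    by_cases hj : j.val ≤ n
    · have exponent : n - 1 - j = n - j - 1 := by omega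
      simp only [chainDWA, if_pos hj, Fin.coe_clamp, states_left, exponent, Nat.succ_sub hj,
        chainSum]
    · have sink : n + 1 - j = 0 := by omega
      have still_sink : n - j = 0 := by omega
      simp only [chainDWA, if_neg hj, Fin.coe_clamp, states_left, sink, still_sink, chainSum,
        add_zero]

theorem chainDWA_val {A : Type} (σ : A → ℤ) (n : ℕ) (w : List A) :
    (chainDWA σ n).val w = chainSum σ (n + 1) w :=
  chainDWA_valFrom σ n 0 w

theorem obs_nil (n : ℕ) : Obs n [] = 1 := by
  simp [Obs]

theorem obs_zero_cons_i (w : List ABI) : Obs 0 (.i :: w) = 1 := by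
  simp [Obs]

theorem obs_succ_cons_i (n : ℕ) (w : List ABI) : Obs (n + 1) (.i :: w) = Obs n w := by
  have first_letter : (∃ k, List.replicate k ABI.i ++ [.a] <+: .i :: w) ↔
      ∃ k, List.replicate k ABI.i ++ [.a] <+: w := by
    rw [← Nat.or_exists_add_one]
    simp [List.replicate_succ]
  classical
  simp only [Obs, first_letter, Nat.exists_lt_succ_left]
  simp [List.replicate_succ]

theorem obs_cons_a (n : ℕ) (w : List ABI) :
    Obs n (.a :: w) = if 0 < n ∧ List.replicate n .b <+: w then 1 else 2 := by
  have first_letter : ∃ k, List.replicate k ABI.i ++ [.a] <+: .a :: w := ⟨0, by simp⟩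
  cases n with
  | zero => simp [Obs, first_letter]
  | succ n =>
    simp only [Obs, first_letter, Nat.exists_lt_succ_left]
    simp [List.replicate_succ]

theorem obs_cons_b (n : ℕ) (w : List ABI) :
    Obs n (.b :: w) = if 0 < n ∧ List.replicate n .a <+: w then 1 else 0 := by
  have first_letter : ¬ ∃ k, List.replicate k ABI.i ++ [.a] <+: .b :: w := by
    rw [← Nat.or_exists_add_one]
    simp [List.replicate_succ]
  cases n with
  | zero => simp [Obs, first_letter]
  | succ n =>
    simp only [Obs, first_letter, Nat.exists_lt_succ_left]
    simp [List.replicate_succ]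

theorem obs_eq_one_add_sign_chainSum (n : ℕ) (w : List ABI) :
    (Obs n w : ℤ) = 1 + (chainSum ABI.sign (n + 1) w).sign := by
  induction w generalizing n with
  | nil => simp [obs_nil]
  | cons x w ih =>
    cases x with
    | i =>
      cases n with
      | zero => simp [obs_zero_cons_i, chainSum, ABI.sign]
      | succ n => simp [obs_succ_cons_i, ih, chainSum, ABI.sign]
    | a =>
      have value : chainSum ABI.sign (n + 1) (.a :: w) =
          2 ^ (n - 1) - chainSum (-ABI.sign) n w := by
        simp [chainSum, chainSum_neg, ABI.sign]
      have neg_sign_le_one : ∀ x, (-ABI.sign) x ≤ 1 := by rintro (_ | _ | _) <;> decide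
      have cancelled_by_b : ∀ x, (-ABI.sign) x = 1 ↔ x = .b := by rintro (_ | _ | _) <;> decide
      rw [value, sign_two_pow_sub_chainSum neg_sign_le_one cancelled_by_b, obs_cons_a]
      split_ifs <;> rfl
    | b =>
      have value : chainSum ABI.sign (n + 1) (.b :: w) =
          -(2 ^ (n - 1) - chainSum ABI.sign n w) := by
        simp only [chainSum, ABI.sign]; ring
      have sign_le_one : ∀ x, ABI.sign x ≤ 1 := by rintro (_ | _ | _) <;> decide
      have cancelled_by_a : ∀ x, ABI.sign x = 1 ↔ x = .a := by rintro (_ | _ | _) <;> decide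
      rw [value, Int.sign_neg, sign_two_pow_sub_chainSum sign_le_one cancelled_by_a, obs_cons_b]
      split_ifs <;> rfl

theorem realizes_of_obs_eq {Q : Type} {n : ℕ} {M : DWA ABI Q}
    (h : ∀ w, w ≠ [] → (Obs n w : ℤ) = 1 + (M.val w).sign) : Realizes n M := by
  intro w hw
  rw [← Int.sign_eq_neg_one_iff_neg, ← Int.sign_eq_zero_iff_zero, ← Int.sign_eq_one_iff_pos]
  have := h w hw
  omega

/-- the chain DWA with exactly `n + 2` states (states `q_0, …, q_n, s`, where
`q_j = ⟨j, _⟩` and `s = ⟨n+1, _⟩`, every transition from `q_j` goes to `q_{j+1}`, `q_n` and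
`s` go to `s`, with weights `c(q_j, i) = 0`, `c(q_j, a) = -c(q_j, b) = 2^{n-1-j}` for `j < n`,
`c(q_n, a) = -c(q_n, b) = 1`, `c(q_n, i) = 0`, and `c(s, ·) = 0`) realizes `O_n`.
In particular, for every `n > 1` some DWA with exactly `n + 2` states realizes `O_n`. -/
theorem chain_dwa_realizes (n : ℕ) (hn : 1 < n) :
    let δ : Fin (n + 2) → ABI → Fin (n + 2) := fun j _ => ⟨min (j.val + 1) (n + 1), by omega⟩
    let c : Fin (n + 2) → ABI → ℤ := fun j x =>
      if j.val < n then
        (match x with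
          | ABI.a => (2 : ℤ) ^ (n - 1 - j.val)
          | ABI.b => -((2 : ℤ) ^ (n - 1 - j.val))
          | ABI.i => 0)
      else if j.val = n then
        (match x with
          | ABI.a => 1
          | ABI.b => -1
          | ABI.i => 0)
      else 0
    let M : DWA ABI (Fin (n + 2)) := ⟨⟨0, by omega⟩, δ, c⟩
    Realizes n M := by
  intro δ c M
  have chain : M = chainDWA ABI.sign n := by
    have weights : c = (chainDWA ABI.sign n).c := by
      funext j x
      rcases lt_trichotomy j.val n with h | h | h
      · cases x <;> simp [c, chainDWA, ABI.sign, h, h.le]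
      · cases x <;> simp [c, chainDWA, ABI.sign, h]
      · simp [c, chainDWA, h.not_ge, h.not_gt, h.ne']
    exact congrArg (DWA.mk _ δ) weights
  rw [chain]
  exact realizes_of_obs_eq fun w _ => by rw [chainDWA_val, obs_eq_one_add_sign_chainSum]
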